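/- arXiv:1801.03473 — 3 statements merged into one kernel-verified Lean document; each statement's English description precedes it below -/
import Mathlib

section
/- Let γ₁, γ₂ ∈ [0,1) with γ := γ₁ + γ₂ ∈ (0,1), and let f : ℝ → ℝ satisfy |f(x) − f(y)| ≤ K·|x − y|^γ for all x, y ∈ ℝ, where K ≥ 0. Then for all x₁, x₂, r ∈ ℝ one has |f(x₁ + r) − f(x₁) − f(x₂ + r) + f(x₂)| ≤ 2·K·|x₁ − x₂|^{γ₁}·|r|^{γ₂}. -/
open Set

/-- If `f : ℝ → ℝ` is `(γ₁+γ₂)`-Hölder with constant `K`, where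
`γ₁, γ₂ ∈ [0,1)` and `γ₁ + γ₂ ∈ (0,1)`, then the second difference of `f` satisfies
`|f(x₁+r) − f(x₁) − f(x₂+r) + f(x₂)| ≤ 2·K·|x₁−x₂|^γ₁·|r|^γ₂`. -/
theorem second_difference_holder_low (γ₁ γ₂ : ℝ)
    (hγ₁ : γ₁ ∈ Ico (0 : ℝ) 1) (hγ₂ : γ₂ ∈ Ico (0 : ℝ) 1)
    (hγ : γ₁ + γ₂ ∈ Ioo (0 : ℝ) 1)
    (K : ℝ) (hK : 0 ≤ K) (f : ℝ → ℝ)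
    (hf : ∀ x y : ℝ, |f x - f y| ≤ K * |x - y| ^ (γ₁ + γ₂)) :
    ∀ x₁ x₂ r : ℝ,
      |f (x₁ + r) - f x₁ - f (x₂ + r) + f x₂| ≤ 2 * K * |x₁ - x₂| ^ γ₁ * |r| ^ γ₂ := by
  intro x₁ x₂ r
  have hadd : ∀ t : ℝ, |t| ^ (γ₁ + γ₂) = |t| ^ γ₁ * |t| ^ γ₂ := fun t =>
    Real.rpow_add_of_nonneg (abs_nonneg t) hγ₁.1 hγ₂.1
  rcases le_total |x₁ - x₂| |r| with h | h
  · have h1 := hf (x₁ + r) (x₂ + r)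
    have h2 := hf x₁ x₂
    rw [add_sub_add_right_eq_sub] at h1
    have h3 : |x₁ - x₂| ^ (γ₁ + γ₂) ≤ |x₁ - x₂| ^ γ₁ * |r| ^ γ₂ := by
      rw [hadd]
      exact mul_le_mul_of_nonneg_left (Real.rpow_le_rpow (abs_nonneg _) h hγ₂.1)
        (Real.rpow_nonneg (abs_nonneg _) _)
    have h4 := mul_le_mul_of_nonneg_left h3 hK
    rw [abs_le] at h1 h2 ⊢
    constructor <;> linarith [h1.1, h1.2, h2.1, h2.2]
  · have h1 := hf (x₁ + r) x₁
    have h2 := hf (x₂ + r) x₂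
    rw [add_sub_cancel_left] at h1 h2
    have h3 : |r| ^ (γ₁ + γ₂) ≤ |x₁ - x₂| ^ γ₁ * |r| ^ γ₂ := by
      rw [hadd]
      exact mul_le_mul_of_nonneg_right (Real.rpow_le_rpow (abs_nonneg _) h hγ₁.1)
        (Real.rpow_nonneg (abs_nonneg _) _)
    have h4 := mul_le_mul_of_nonneg_left h3 hK
    rw [abs_le] at h1 h2 ⊢
    constructor <;> linarith [h1.1, h1.2, h2.1, h2.2]
end

section
/- Let γ ∈ (1,2) and γ₁, γ₂ ∈ (0,1) with γ₁ + γ₂ = γ. Let f : ℝ → ℝ be differentiable with derivative f′ satisfying |f′(x) − f′(y)| ≤ K·|x − y|^{γ−1} for all x, y ∈ ℝ, where K ≥ 0. Then for all x₁, x₂, r ∈ ℝ one has |f(x₁ + r) − f(x₁) − f(x₂ + r) + f(x₂)| ≤ K·|x₁ − x₂|^{γ₁}·|r|^{γ₂}. -/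
open Set

lemma second_diff_aux (K δ : ℝ) (f : ℝ → ℝ) (hdiff : Differentiable ℝ f)
    (hf' : ∀ x y : ℝ, |deriv f x - deriv f y| ≤ K * |x - y| ^ δ) (x₁ x₂ r : ℝ) :
    |f (x₁ + r) - f x₁ - f (x₂ + r) + f x₂| ≤ K * |x₁ - x₂| ^ δ * |r| := by
  have hd : ∀ t ∈ (univ : Set ℝ), HasDerivWithinAt (fun t => f (x₁ + t) - f (x₂ + t))
      (deriv f (x₁ + t) - deriv f (x₂ + t)) univ t := by
    intro t _
    exact (((hdiff (x₁ + t)).hasDerivAt.comp_const_add x₁ t).sub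
      ((hdiff (x₂ + t)).hasDerivAt.comp_const_add x₂ t)).hasDerivWithinAt
  have hb : ∀ t ∈ (univ : Set ℝ),
      ‖deriv f (x₁ + t) - deriv f (x₂ + t)‖ ≤ K * |x₁ - x₂| ^ δ := by
    intro t _
    have := hf' (x₁ + t) (x₂ + t)
    rwa [add_sub_add_right_eq_sub] at this
  have := convex_univ.norm_image_sub_le_of_norm_hasDerivWithin_le hd hb
    (mem_univ 0) (mem_univ r)
  simp only [Real.norm_eq_abs, add_zero, sub_zero] at this
  convert this using 2
  ring

lemma interp_aux (a b p q : ℝ) (hb : 0 ≤ b) (hab : b ≤ a) (hq : 0 ≤ q) (hq1 : q ≤ 1)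
    (hpq : 0 ≤ p + q - 1) : a ^ (p + q - 1) * b ≤ a ^ p * b ^ q := by
  have ha : 0 ≤ a := hb.trans hab
  have h1 : b = b ^ (1 - q) * b ^ q := by
    rw [← Real.rpow_add_of_nonneg hb (by linarith) hq]; simp
  have h2 : a ^ p = a ^ (p + q - 1) * a ^ (1 - q) := by
    rw [← Real.rpow_add_of_nonneg ha hpq (by linarith)]; congr 1; ring
  have h3 : b ^ (1 - q) ≤ a ^ (1 - q) := Real.rpow_le_rpow hb hab (by linarith)
  calc a ^ (p + q - 1) * b = a ^ (p + q - 1) * (b ^ (1 - q) * b ^ q) := by rw [← h1]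
    _ ≤ a ^ (p + q - 1) * (a ^ (1 - q) * b ^ q) := by gcongr
    _ = a ^ p * b ^ q := by rw [h2]; ring

/-- If `f : ℝ → ℝ` is differentiable and its derivative is
`(γ−1)`-Hölder with constant `K`, where `γ ∈ (1,2)` and `γ₁, γ₂ ∈ (0,1)` with
`γ₁ + γ₂ = γ`, then the second difference of `f` satisfies
`|f(x₁+r) − f(x₁) − f(x₂+r) + f(x₂)| ≤ K·|x₁−x₂|^γ₁·|r|^γ₂`. -/
theorem second_difference_holder_high (γ γ₁ γ₂ : ℝ)
    (hγ : γ ∈ Ioo (1 : ℝ) 2) (hγ₁ : γ₁ ∈ Ioo (0 : ℝ) 1) (hγ₂ : γ₂ ∈ Ioo (0 : ℝ) 1)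
    (hsum : γ₁ + γ₂ = γ)
    (K : ℝ) (hK : 0 ≤ K) (f : ℝ → ℝ)
    (hdiff : Differentiable ℝ f)
    (hf' : ∀ x y : ℝ, |deriv f x - deriv f y| ≤ K * |x - y| ^ (γ - 1)) :
    ∀ x₁ x₂ r : ℝ,
      |f (x₁ + r) - f x₁ - f (x₂ + r) + f x₂| ≤ K * |x₁ - x₂| ^ γ₁ * |r| ^ γ₂ := by
  intro x₁ x₂ r
  obtain ⟨h1, h2⟩ := hγ
  obtain ⟨h3, h4⟩ := hγ₁
  obtain ⟨h5, h6⟩ := hγ₂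
  subst hsum
  rcases le_total |r| |x₁ - x₂| with h | h
  · refine (second_diff_aux K _ f hdiff hf' x₁ x₂ r).trans ?_
    rw [mul_assoc, mul_assoc]
    exact mul_le_mul_of_nonneg_left
      (interp_aux _ _ γ₁ γ₂ (abs_nonneg _) h h5.le h6.le (by linarith)) hK
  · have key := second_diff_aux K _ f hdiff hf' (x₂ + r) x₂ (x₁ - x₂)
    have e : f (x₂ + r + (x₁ - x₂)) - f (x₂ + r) - f (x₂ + (x₁ - x₂)) + f x₂
        = f (x₁ + r) - f x₁ - f (x₂ + r) + f x₂ := by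
      rw [show x₂ + r + (x₁ - x₂) = x₁ + r by ring, show x₂ + (x₁ - x₂) = x₁ by ring]
      ring
    rw [e, add_sub_cancel_left] at key
    refine key.trans ?_
    have := interp_aux _ _ γ₂ γ₁ (abs_nonneg _) h h3.le h4.le (by linarith)
    rw [add_comm γ₂ γ₁] at this
    rw [mul_assoc, mul_assoc, mul_comm (|x₁ - x₂| ^ γ₁)]
    exact mul_le_mul_of_nonneg_left this hK
end

section
/- Let (Ω, ℱ, P) be a probability space, T > 0, and let X : [0,T] × Ω → ℝ be a jointly measurable process. Let (f_n) be a sequence of continuous functions ℝ → ℝ with sup_n sup_x |f_n(x)| < ∞, and let (b_n) be a sequence of bounded continuous functions ℝ → ℝ. Define A^n_{t′}(ω) := ∫_0^{t′} b_n(X_s(ω)) ds and let A : [0,T] × Ω → ℝ be a process such that for every t′ ∈ [0,T] the random variables A^n_{t′} converge to A_{t′} in probability as n → ∞. Let p₁, p₂ > 0 with 1/p₁ + 1/p₂ ≤ 1, γ₁, γ₂ > 0 with γ₁ + γ₂ > 1, and constants C_f, C_A ≥ 1 such that for all n and all s′, t′ ∈ [0,T]: E|f_n(X_{t′}) − f_n(X_{s′})|^{p₁}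 ≤ C_f^{p₁}·|t′ − s′|^{p₁γ₁}, E|f_n(X_{t′})|^{p₁} ≤ C_f^{p₁}, E|A_{t′} − A_{s′}|^{p₂} ≤ C_A^{p₂}·|t′ − s′|^{p₂γ₂}, and E|A^n_{t′} − A^n_{s′}|^{p₂} ≤ C_A^{p₂}·|t′ − s′|^{p₂γ₂}. Fix t ∈ [0,T] and for m ∈ ℕ set t^k_m := k·t·2^{−m}. For each n, let I_n be a random variable such that the dyadic Riemann sums Σ_{i=0}^{2^m−1} f_n(X_{t^i_m})·(A_{t^{i+1}_m} − A_{t^i_m}) converge to I_n in probability as m → ∞, and set J_n := ∫_0^t f_n(X_s)·b_n(X_s) ds. Then I_n − J_n converges to 0 in probability as n → ∞. -/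
open MeasureTheory Filter Set intervalIntegral

/-- The `m`-th dyadic left-endpoint Riemann sum
`Σ_{i=0}^{2^m−1} f(X_{t^i_m}(ω))·(A_{t^{i+1}_m}(ω) − A_{t^i_m}(ω))`,
where `t^k_m := s + k·2^{−m}·(t − s)`. -/
noncomputable def dyadicRiemannSum {Ω : Type*} (X A : ℝ → Ω → ℝ) (f : ℝ → ℝ)
    (s t : ℝ) (m : ℕ) (ω : Ω) : ℝ :=
  ∑ i ∈ Finset.range (2 ^ m),
    f (X (s + (i : ℝ) * (2 : ℝ) ^ (-(m : ℝ)) * (t - s)) ω) *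
      (A (s + ((i : ℝ) + 1) * (2 : ℝ) ^ (-(m : ℝ)) * (t - s)) ω -
        A (s + (i : ℝ) * (2 : ℝ) ^ (-(m : ℝ)) * (t - s)) ω)

/-- Sum over `2n` indices split into pairs. -/
lemma sum_range_two_mul_pairs (n : ℕ) (g : ℕ → ℝ) :
    ∑ i ∈ Finset.range (2 * n), g i = ∑ i ∈ Finset.range n, (g (2 * i) + g (2 * i + 1)) := by
  induction n with
  | zero => simp
  | succ k ih =>
    rw [show 2 * (k + 1) = 2 * k + 1 + 1 by ring, Finset.sum_range_succ, Finset.sum_range_succ,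
      Finset.sum_range_succ, ih]
    ring

/-- `L^p` seminorm bound from a bound on the `p`-th moment, for bounded variables. -/
lemma eLpNorm_le_of_moment {Ω : Type*} [MeasurableSpace Ω] {μ : Measure Ω} [IsProbabilityMeasure μ]
    {F : Ω → ℝ} (hF : AEStronglyMeasurable F μ) {K : ℝ} (hK : ∀ ω, |F ω| ≤ K)
    {p γ C d : ℝ} (hp : 0 < p) (hC : 0 ≤ C) (hd : 0 ≤ d)
    (h : (∫ ω, |F ω| ^ p ∂μ) ≤ C ^ p * d ^ (p * γ)) :
    eLpNorm F (ENNReal.ofReal p) μ ≤ ENNReal.ofReal (C * d ^ γ) := by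
  have hm : MemLp F (ENNReal.ofReal p) μ :=
    MemLp.of_bound hF K (Eventually.of_forall fun ω => by simpa using hK ω)
  rw [hm.eLpNorm_eq_integral_rpow_norm (by simpa using hp) (by simp),
    ENNReal.toReal_ofReal hp.le]
  apply ENNReal.ofReal_le_ofReal
  have h0 : 0 ≤ ∫ ω, |F ω| ^ p ∂μ := integral_nonneg fun ω => by positivity
  calc (∫ a, ‖F a‖ ^ p ∂μ) ^ p⁻¹ ≤ (C ^ p * d ^ (p * γ)) ^ p⁻¹ := by
        simp only [Real.norm_eq_abs]
        exact Real.rpow_le_rpow h0 h (by positivity)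
    _ = C * d ^ γ := by
        rw [Real.mul_rpow (by positivity) (by positivity), ← Real.rpow_mul hC,
          ← Real.rpow_mul hd, mul_inv_cancel₀ hp.ne', Real.rpow_one]
        congr 2
        field_simp

/-- Hölder's inequality on a probability space with `1/p₁ + 1/p₂ ≤ 1`. -/
lemma holder_one {Ω : Type*} [MeasurableSpace Ω] {μ : Measure Ω} [IsProbabilityMeasure μ]
    {F G : Ω → ℝ} (hF : AEStronglyMeasurable F μ) (hG : AEStronglyMeasurable G μ)
    {p₁ p₂ : ℝ} (hp₁ : 0 < p₁) (hp₂ : 0 < p₂) (hp : 1 / p₁ + 1 / p₂ ≤ 1) :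
    eLpNorm (fun ω => F ω * G ω) 1 μ ≤
      eLpNorm F (ENNReal.ofReal p₁) μ * eLpNorm G (ENNReal.ofReal p₂) μ := by
  have h1 : 1 < p₂ := by
    have : 0 < 1 / p₁ := by positivity
    have h : 1 / p₂ < 1 := by linarith
    rwa [div_lt_one hp₂] at h
  have hc := (Real.HolderConjugate.conjExponent h1).symm
  have hle : p₂.conjExponent ≤ p₁ := by
    have h2 := hc.inv_add_inv_eq_one
    have h3 : p₁⁻¹ ≤ p₂.conjExponent⁻¹ := by
      simp only [one_div] at hp
      linarith
    exact (inv_le_inv₀ hp₁ hc.pos).1 h3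
  have : ENNReal.HolderTriple (ENNReal.ofReal p₂.conjExponent) (ENNReal.ofReal p₂) 1 :=
    hc.ennrealOfReal
  have := eLpNorm_smul_le_mul_eLpNorm (p := ENNReal.ofReal p₂.conjExponent)
    (q := ENNReal.ofReal p₂) (r := 1) hG hF
  calc eLpNorm (fun ω => F ω * G ω) 1 μ = eLpNorm (F • G) 1 μ := rfl
    _ ≤ _ := this
    _ ≤ _ := by
      gcongr
      exact eLpNorm_le_eLpNorm_of_exponent_le (ENNReal.ofReal_le_ofReal hle) hF

/-- One refinement step of the dyadic sums. -/
lemma dyadic_step {Ω : Type*} (X B : ℝ → Ω → ℝ) (f : ℝ → ℝ) (t : ℝ) (m : ℕ) (ω : Ω) :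
    dyadicRiemannSum X B f 0 t (m + 1) ω - dyadicRiemannSum X B f 0 t m ω =
    ∑ i ∈ Finset.range (2 ^ m),
      (f (X ((2 * (i : ℝ) + 1) * 2 ^ (-((m + 1 : ℕ) : ℝ)) * t) ω)
        - f (X ((2 * (i : ℝ)) * 2 ^ (-((m + 1 : ℕ) : ℝ)) * t) ω)) *
      (B ((2 * (i : ℝ) + 2) * 2 ^ (-((m + 1 : ℕ) : ℝ)) * t) ω
        - B ((2 * (i : ℝ) + 1) * 2 ^ (-((m + 1 : ℕ) : ℝ)) * t) ω) := by
  have hh : (2 : ℝ) ^ (-(m : ℝ)) = 2 * (2 : ℝ) ^ (-((m + 1 : ℕ) : ℝ)) := by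
    rw [show -(m : ℝ) = 1 + -((m + 1 : ℕ) : ℝ) by push_cast; ring,
      Real.rpow_add (by norm_num), Real.rpow_one]
  unfold dyadicRiemannSum
  rw [show (2 : ℕ) ^ (m + 1) = 2 * 2 ^ m by ring, sum_range_two_mul_pairs, hh,
    ← Finset.sum_sub_distrib]
  apply Finset.sum_congr rfl
  intro i _
  generalize (2 : ℝ) ^ (-((m + 1 : ℕ) : ℝ)) = h
  push_cast
  rw [show 0 + 2 * (i : ℝ) * h * (t - 0) = 2 * i * h * t by ring,
    show 0 + (2 * (i : ℝ) + 1) * h * (t - 0) = (2 * i + 1) * h * t by ring,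
    show 0 + (2 * (i : ℝ) + 1 + 1) * h * (t - 0) = (2 * i + 2) * h * t by ring,
    show 0 + (i : ℝ) * (2 * h) * (t - 0) = 2 * i * h * t by ring,
    show 0 + ((i : ℝ) + 1) * (2 * h) * (t - 0) = (2 * i + 2) * h * t by ring]
  ring

lemma grid_mem {t T : ℝ} (ht : t ∈ Icc (0 : ℝ) T) (m : ℕ) {x : ℝ} (hx0 : 0 ≤ x)
    (hx : x ≤ (2 : ℝ) ^ m) : x * (2 : ℝ) ^ (-(m : ℝ)) * t ∈ Icc (0 : ℝ) T := by
  obtain ⟨h0, h1⟩ := ht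
  have hpos : (0 : ℝ) < (2 : ℝ) ^ (-(m : ℝ)) := by positivity
  refine ⟨by positivity, le_trans ?_ h1⟩
  have : x * (2 : ℝ) ^ (-(m : ℝ)) ≤ 1 := by
    rw [Real.rpow_neg (by norm_num), Real.rpow_natCast, ← div_eq_mul_inv, div_le_one (by positivity)]
    exact hx
  nlinarith

lemma dyadic_aesm {Ω : Type*} [MeasurableSpace Ω] {μ : Measure Ω}
    (X B : ℝ → Ω → ℝ) (f : ℝ → ℝ) {t T : ℝ} (ht : t ∈ Icc (0 : ℝ) T)
    (hF : ∀ s ∈ Icc (0 : ℝ) T, AEStronglyMeasurable (fun ω => f (X s ω)) μ)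
    (hB : ∀ s ∈ Icc (0 : ℝ) T, AEStronglyMeasurable (B s) μ) (m : ℕ) :
    AEStronglyMeasurable (dyadicRiemannSum X B f 0 t m) μ := by
  unfold dyadicRiemannSum
  refine Finset.aestronglyMeasurable_fun_sum _ fun i hi => ?_
  have hi' : (i : ℝ) + 1 ≤ 2 ^ m := by exact_mod_cast Finset.mem_range.1 hi
  have a1 := grid_mem ht m (x := i) (by positivity) (by linarith)
  have a2 := grid_mem ht m (x := i + 1) (by positivity) hi'
  simp only [zero_add, sub_zero]
  exact (hF _ a1).mul ((hB _ a2).sub (hB _ a1))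

lemma dyadic_step_norm {Ω : Type*} [MeasurableSpace Ω] {μ : Measure Ω} [IsProbabilityMeasure μ]
    (X B : ℝ → Ω → ℝ) (f : ℝ → ℝ) {t T : ℝ} (ht : t ∈ Icc (0 : ℝ) T)
    (hF : ∀ s ∈ Icc (0 : ℝ) T, AEStronglyMeasurable (fun ω => f (X s ω)) μ)
    (hB : ∀ s ∈ Icc (0 : ℝ) T, AEStronglyMeasurable (B s) μ)
    {p₁ p₂ γ₁ γ₂ K L : ℝ} (hp₁ : 0 < p₁) (hp₂ : 0 < p₂) (hp : 1 / p₁ + 1 / p₂ ≤ 1)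
    (hγ₁ : 0 < γ₁) (hγ₂ : 0 < γ₂) (hK : 0 ≤ K) (hL : 0 ≤ L)
    (h1 : ∀ s' ∈ Icc (0 : ℝ) T, ∀ t' ∈ Icc (0 : ℝ) T,
      eLpNorm (fun ω => f (X t' ω) - f (X s' ω)) (ENNReal.ofReal p₁) μ ≤
        ENNReal.ofReal (K * |t' - s'| ^ γ₁))
    (h2 : ∀ s' ∈ Icc (0 : ℝ) T, ∀ t' ∈ Icc (0 : ℝ) T,
      eLpNorm (fun ω => B t' ω - B s' ω) (ENNReal.ofReal p₂) μ ≤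
        ENNReal.ofReal (L * |t' - s'| ^ γ₂)) (m : ℕ) :
    eLpNorm (fun ω => dyadicRiemannSum X B f 0 t (m + 1) ω - dyadicRiemannSum X B f 0 t m ω) 1 μ ≤
      ENNReal.ofReal (K * L * t ^ (γ₁ + γ₂) * ((2 : ℝ) ^ (1 - (γ₁ + γ₂))) ^ m) := by
  simp_rw [dyadic_step]
  set h : ℝ := (2 : ℝ) ^ (-((m + 1 : ℕ) : ℝ)) with hh
  have hpos : 0 < h := by positivity
  have ht0 : 0 ≤ t := ht.1
  have key : ∀ i ∈ Finset.range (2 ^ m),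
      2 * (i : ℝ) * h * t ∈ Icc (0 : ℝ) T ∧ (2 * (i : ℝ) + 1) * h * t ∈ Icc (0 : ℝ) T ∧
      (2 * (i : ℝ) + 2) * h * t ∈ Icc (0 : ℝ) T := by
    intro i hi
    have hi' : (i : ℝ) + 1 ≤ 2 ^ m := by exact_mod_cast Finset.mem_range.1 hi
    have hq : (2 : ℝ) ^ (m + 1) = 2 * 2 ^ m := by ring
    exact ⟨grid_mem ht (m + 1) (by positivity) (by linarith),
      grid_mem ht (m + 1) (by positivity) (by linarith),
      grid_mem ht (m + 1) (by positivity) (by linarith)⟩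
  have hsum := eLpNorm_sum_le (μ := μ) (p := 1) (s := Finset.range (2 ^ m))
    (f := fun (i : ℕ) ω => (f (X ((2 * (i : ℝ) + 1) * h * t) ω) - f (X (2 * (i : ℝ) * h * t) ω)) *
      (B ((2 * (i : ℝ) + 2) * h * t) ω - B ((2 * (i : ℝ) + 1) * h * t) ω))
    (fun i hi => by
      obtain ⟨a0, a1, a2⟩ := key i hi
      exact ((hF _ a1).sub (hF _ a0)).mul ((hB _ a2).sub (hB _ a1))) le_rfl
  have e : (∑ i ∈ Finset.range (2 ^ m), fun ω =>
      (f (X ((2 * (i : ℝ) + 1) * h * t) ω) - f (X (2 * (i : ℝ) * h * t) ω)) *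
      (B ((2 * (i : ℝ) + 2) * h * t) ω - B ((2 * (i : ℝ) + 1) * h * t) ω)) =
      fun ω => ∑ i ∈ Finset.range (2 ^ m),
      (f (X ((2 * (i : ℝ) + 1) * h * t) ω) - f (X (2 * (i : ℝ) * h * t) ω)) *
      (B ((2 * (i : ℝ) + 2) * h * t) ω - B ((2 * (i : ℝ) + 1) * h * t) ω) := by
    ext ω; simp
  rw [e] at hsum
  refine hsum.trans ?_
  have each : ∀ i ∈ Finset.range (2 ^ m), eLpNorm (fun ω =>
      (f (X ((2 * (i : ℝ) + 1) * h * t) ω) - f (X (2 * (i : ℝ) * h * t) ω)) *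
      (B ((2 * (i : ℝ) + 2) * h * t) ω - B ((2 * (i : ℝ) + 1) * h * t) ω)) 1 μ ≤
      ENNReal.ofReal (K * L * (h * t) ^ (γ₁ + γ₂)) := by
    intro i hi
    obtain ⟨a0, a1, a2⟩ := key i hi
    refine (holder_one ((hF _ a1).sub (hF _ a0)) ((hB _ a2).sub (hB _ a1)) hp₁ hp₂ hp).trans ?_
    have e1 := h1 _ a0 _ a1
    have e2 := h2 _ a1 _ a2
    rw [show (2 * (i : ℝ) + 1) * h * t - 2 * i * h * t = h * t by ring,
      abs_of_nonneg (by positivity)] at e1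
    rw [show (2 * (i : ℝ) + 2) * h * t - (2 * i + 1) * h * t = h * t by ring,
      abs_of_nonneg (by positivity)] at e2
    refine (mul_le_mul' e1 e2).trans ?_
    rw [← ENNReal.ofReal_mul (by positivity),
      Real.rpow_add_of_nonneg (by positivity) hγ₁.le hγ₂.le]
    apply ENNReal.ofReal_le_ofReal
    apply le_of_eq; ring
  refine (Finset.sum_le_sum each).trans ?_
  rw [Finset.sum_const, Finset.card_range, nsmul_eq_mul,
    ← ENNReal.ofReal_natCast, ← ENNReal.ofReal_mul (by positivity)]
  apply ENNReal.ofReal_le_ofReal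
  have e3 : (h * t) ^ (γ₁ + γ₂) = h ^ (γ₁ + γ₂) * t ^ (γ₁ + γ₂) :=
    Real.mul_rpow hpos.le ht0
  have e4 : (2 : ℝ) ^ m * h ^ (γ₁ + γ₂) ≤ ((2 : ℝ) ^ (1 - (γ₁ + γ₂))) ^ m := by
    rw [hh, ← Real.rpow_mul (by norm_num), ← Real.rpow_natCast, ← Real.rpow_natCast (_ ^ _),
      ← Real.rpow_mul (by norm_num), ← Real.rpow_add (by norm_num)]
    apply Real.rpow_le_rpow_of_exponent_le (by norm_num)
    push_cast
    nlinarith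
  rw [e3]
  push_cast
  calc (2 : ℝ) ^ m * (K * L * (h ^ (γ₁ + γ₂) * t ^ (γ₁ + γ₂)))
      = K * L * t ^ (γ₁ + γ₂) * (2 ^ m * h ^ (γ₁ + γ₂)) := by ring
    _ ≤ _ := by gcongr

/-- Uniform sewing estimate passed to the limit in measure. -/
lemma dyadic_limit_norm {Ω : Type*} [MeasurableSpace Ω] {μ : Measure Ω}
    {S : ℕ → Ω → ℝ} {Z : Ω → ℝ} (hS : ∀ m, AEStronglyMeasurable (S m) μ)
    (hZ : TendstoInMeasure μ S atTop Z) {D r : ℝ} (hD : 0 ≤ D) (hr0 : 0 ≤ r) (hr : r < 1)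
    (hstep : ∀ m, eLpNorm (fun ω => S (m + 1) ω - S m ω) 1 μ ≤ ENNReal.ofReal (D * r ^ m))
    (m : ℕ) : eLpNorm (fun ω => Z ω - S m ω) 1 μ ≤ ENNReal.ofReal (D * r ^ m / (1 - r)) := by
  have h1r : 0 < 1 - r := by linarith
  have hk : ∀ k, eLpNorm (fun ω => S (m + k) ω - S m ω) 1 μ ≤
      ENNReal.ofReal (D * r ^ m * (1 - r ^ k) / (1 - r)) := by
    intro k
    induction k with
    | zero => simp
    | succ k ih =>
      have e : (fun ω => S (m + (k + 1)) ω - S m ω) =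
        (fun ω => S (m + k + 1) ω - S (m + k) ω) + fun ω => S (m + k) ω - S m ω := by
        ext ω; simp [add_assoc]
      rw [e]
      refine (eLpNorm_add_le ((hS _).sub (hS _)) ((hS _).sub (hS _)) le_rfl).trans ?_
      refine (add_le_add (hstep _) ih).trans ?_
      have : r ^ k ≤ 1 := pow_le_one₀ hr0 hr.le
      rw [← ENNReal.ofReal_add (by positivity)
        (by apply div_nonneg _ h1r.le; exact mul_nonneg (by positivity) (by linarith))]
      apply ENNReal.ofReal_le_ofReal
      apply le_of_eq
      field_simp
      ring
  have hk' : ∀ k, eLpNorm (fun ω => S (m + k) ω - S m ω) 1 μ ≤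
      ENNReal.ofReal (D * r ^ m / (1 - r)) := by
    intro k
    refine (hk k).trans (ENNReal.ofReal_le_ofReal ?_)
    apply div_le_div_of_nonneg_right _ h1r.le
    have : 0 ≤ r ^ k := by positivity
    have : 0 ≤ D * r ^ m := by positivity
    nlinarith
  have hconv : TendstoInMeasure μ (fun k ω => S (m + k) ω - S m ω) atTop
      (fun ω => Z ω - S m ω) := by
    rw [tendstoInMeasure_iff_norm] at hZ ⊢
    intro ε hε
    have := (hZ ε hε).comp (tendsto_add_atTop_nat m)
    refine this.congr fun k => ?_
    simp [add_comm]
  obtain ⟨ns, -, hns⟩ := hconv.exists_seq_tendsto_ae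
  refine (Lp.eLpNorm_lim_le_liminf_eLpNorm (fun n => (hS _).sub (hS _)) _ hns).trans ?_
  exact liminf_le_of_frequently_le' (Frequently.of_forall fun n => hk' (ns n))

lemma tim_zero_of_le {Ω : Type*} [MeasurableSpace Ω] {μ : Measure Ω}
    {Z U V : ℕ → Ω → ℝ} {M : ℝ} (hM : 0 < M)
    (hU : TendstoInMeasure μ U atTop (fun _ => (0 : ℝ)))
    (hV : TendstoInMeasure μ V atTop (fun _ => (0 : ℝ)))
    (hZ : ∀ n ω, |Z n ω| ≤ M * (|U n ω| + |V n ω|)) :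
    TendstoInMeasure μ Z atTop (fun _ => (0 : ℝ)) := by
  rw [tendstoInMeasure_iff_norm] at hU hV ⊢
  intro ε hε
  have hε' : 0 < ε / (2 * M) := by positivity
  have hlim := (hU _ hε').add (hV _ hε')
  rw [add_zero] at hlim
  refine tendsto_of_tendsto_of_tendsto_of_le_of_le tendsto_const_nhds hlim (fun _ => zero_le) ?_
  intro n
  refine (measure_mono ?_).trans (measure_union_le _ _)
  intro ω hω
  simp only [sub_zero, Real.norm_eq_abs, mem_ofPred_eq, mem_union] at hω ⊢
  by_contra! hcon
  have := hZ n ω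
  have h2 : |U n ω| + |V n ω| < ε / M := by
    have : ε / M = ε / (2 * M) + ε / (2 * M) := by field_simp; ring
    linarith [hcon.1, hcon.2]
  rw [lt_div_iff₀ hM] at h2
  linarith

lemma tim_zero_sum {Ω : Type*} [MeasurableSpace Ω] {μ : Measure Ω}
    {V : ℕ → ℕ → Ω → ℝ} (N : ℕ)
    (hV : ∀ i < N, TendstoInMeasure μ (V i) atTop (fun _ => (0 : ℝ))) :
    TendstoInMeasure μ (fun n ω => ∑ i ∈ Finset.range N, V i n ω) atTop (fun _ => (0 : ℝ)) := by
  induction N with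
  | zero =>
    rw [tendstoInMeasure_iff_norm]
    intro ε hε
    simp [not_le.2 hε]
  | succ N ih =>
    refine tim_zero_of_le one_pos (ih fun i hi => hV i (by omega)) (hV N (by omega)) fun n ω => ?_
    rw [Finset.sum_range_succ, one_mul]
    exact abs_add_le _ _

/-- Convergence to zero in measure by uniform `L^1` approximation. -/
lemma tim_zero_of_approx {Ω : Type*} [MeasurableSpace Ω] {μ : Measure Ω}
    {Z : ℕ → Ω → ℝ} {U V W : ℕ → ℕ → Ω → ℝ} {e : ℕ → ℝ} (he : Tendsto e atTop (nhds 0))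
    (hZ : ∀ m n ω, Z n ω = U m n ω + V m n ω + W m n ω)
    (hUm : ∀ m n, AEStronglyMeasurable (U m n) μ) (hWm : ∀ m n, AEStronglyMeasurable (W m n) μ)
    (hU : ∀ m n, eLpNorm (U m n) 1 μ ≤ ENNReal.ofReal (e m))
    (hW : ∀ m n, eLpNorm (W m n) 1 μ ≤ ENNReal.ofReal (e m))
    (hV : ∀ m, TendstoInMeasure μ (V m) atTop (fun _ => (0 : ℝ))) :
    TendstoInMeasure μ Z atTop (fun _ => (0 : ℝ)) := by
  simp only [tendstoInMeasure_iff_norm] at hV ⊢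
  intro ε hε
  have hε3 : 0 < ε / 3 := by positivity
  have mk : ∀ {G : Ω → ℝ} {c : ℝ}, AEStronglyMeasurable G μ →
      eLpNorm G 1 μ ≤ ENNReal.ofReal c →
      μ {ω | ε / 3 ≤ |G ω|} ≤ ENNReal.ofReal c / ENNReal.ofReal (ε / 3) := by
    intro G c hG hc
    rw [eLpNorm_one_eq_lintegral_enorm] at hc
    refine le_trans ?_ ((meas_ge_le_lintegral_div hG.enorm (ε := ENNReal.ofReal (ε / 3))
      (by simpa using hε) (by simp)).trans (ENNReal.div_le_div_right hc _))
    refine measure_mono fun ω hω => ?_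
    simp only [mem_ofPred_eq] at hω ⊢
    rw [Real.enorm_eq_ofReal_abs]
    exact ENNReal.ofReal_le_ofReal hω
  have hbound : ∀ m n, μ {ω | ε ≤ ‖Z n ω - 0‖} ≤
      2 * (ENNReal.ofReal (e m) / ENNReal.ofReal (ε / 3)) + μ {ω | ε / 3 ≤ ‖V m n ω - 0‖} := by
    intro m n
    calc μ {ω | ε ≤ ‖Z n ω - 0‖} ≤ μ (({ω | ε / 3 ≤ |U m n ω|} ∪ {ω | ε / 3 ≤ |W m n ω|}) ∪
          {ω | ε / 3 ≤ ‖V m n ω - 0‖}) := by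
          apply measure_mono
          intro ω hω
          simp only [sub_zero, Real.norm_eq_abs, mem_ofPred_eq, mem_union] at hω ⊢
          by_contra! hcon
          rw [hZ m n ω] at hω
          have a1 := abs_add_le (U m n ω + V m n ω) (W m n ω)
          have a2 := abs_add_le (U m n ω) (V m n ω)
          linarith [hcon.1.1, hcon.1.2, hcon.2]
      _ ≤ _ := (measure_union_le _ _).trans (by
          gcongr
          refine (measure_union_le _ _).trans ?_
          rw [two_mul]
          exact add_le_add (mk (hUm m n) (hU m n)) (mk (hWm m n) (hW m n)))
  have hE : Tendsto (fun m => 2 * (ENNReal.ofReal (e m) / ENNReal.ofReal (ε / 3))) atTop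
      (nhds 0) := by
    have h1 : Tendsto (fun m => ENNReal.ofReal (2 * (e m / (ε / 3)))) atTop (nhds 0) := by
      have := ENNReal.tendsto_ofReal ((he.div_const (ε / 3)).const_mul 2)
      simpa using this
    refine h1.congr fun m => ?_
    rw [ENNReal.ofReal_mul (by norm_num), ENNReal.ofReal_div_of_pos hε3]
    simp
  rw [ENNReal.tendsto_nhds_zero]
  intro δ hδ
  have hδ2 : 0 < δ / 2 := ENNReal.half_pos hδ.ne'
  obtain ⟨m, hm⟩ := ((ENNReal.tendsto_nhds_zero.1 hE) _ hδ2).exists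
  filter_upwards [(ENNReal.tendsto_nhds_zero.1 (hV m (ε / 3) hε3)) _ hδ2] with n hn
  exact (hbound m n).trans ((add_le_add hm hn).trans (ENNReal.add_halves δ).le)

lemma path_integrable {Ω : Type*} [MeasurableSpace Ω] {X : ℝ → Ω → ℝ}
    (hX : Measurable (Function.uncurry X)) {g : ℝ → ℝ} (hg : Measurable g) {N : ℝ}
    (hN : ∀ x, |g x| ≤ N) (ω : Ω) (a c : ℝ) :
    IntervalIntegrable (fun s => g (X s ω)) volume a c := by
  have hm : Measurable fun s => g (X s ω) :=
    hg.comp (hX.comp (measurable_id.prodMk measurable_const))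
  refine (intervalIntegrable_const (c := N)).mono_fun hm.aestronglyMeasurable ?_
  refine Eventually.of_forall fun s => ?_
  simp only [Real.norm_eq_abs]
  exact (hN _).trans (le_abs_self _)

lemma integral_meas {Ω : Type*} [MeasurableSpace Ω] {X : ℝ → Ω → ℝ}
    (hX : Measurable (Function.uncurry X)) {g : ℝ → ℝ} (hg : Measurable g) (a c : ℝ) :
    StronglyMeasurable fun ω => ∫ s in a..c, g (X s ω) := by
  have hm : StronglyMeasurable (Function.uncurry fun (ω : Ω) (s : ℝ) => g (X s ω)) :=
    (hg.comp (hX.comp measurable_swap)).stronglyMeasurable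
  unfold intervalIntegral
  exact hm.integral_prod_right.sub hm.integral_prod_right

lemma cell_bound {Ω : Type*} [MeasurableSpace Ω] {μ : Measure Ω} [IsProbabilityMeasure μ]
    {X : ℝ → Ω → ℝ} (hX : Measurable (Function.uncurry X)) {f b : ℝ → ℝ}
    (hf : Measurable f) (hb : Measurable b) {N : ℝ} (hN : ∀ x, |b x| ≤ N)
    {T K γ : ℝ} (hK : 0 ≤ K) (hγ : 0 < γ)
    (h1 : ∀ s' ∈ Icc (0 : ℝ) T, ∀ t' ∈ Icc (0 : ℝ) T,
      eLpNorm (fun ω => f (X t' ω) - f (X s' ω)) 1 μ ≤ ENNReal.ofReal (K * |t' - s'| ^ γ))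
    {a c : ℝ} (ha : a ∈ Icc (0 : ℝ) T) (hc : c ∈ Icc (0 : ℝ) T) (hac : a ≤ c) :
    eLpNorm (fun ω => ∫ s in a..c, (f (X a ω) - f (X s ω)) * b (X s ω)) 1 μ ≤
      ENNReal.ofReal ((c - a) * (K * (c - a) ^ γ * N)) := by
  have hN0 : 0 ≤ N := (abs_nonneg _).trans (hN 0)
  rw [eLpNorm_one_eq_lintegral_enorm]
  have hmeas : Measurable (Function.uncurry fun (ω : Ω) (s : ℝ) =>
      (f (X a ω) - f (X s ω)) * b (X s ω)) := by
    have h2 : Measurable fun q : Ω × ℝ => X q.2 q.1 := hX.comp measurable_swap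
    have h3 : Measurable fun q : Ω × ℝ => X a q.1 :=
      hX.comp (measurable_const.prodMk measurable_fst)
    exact ((hf.comp h3).sub (hf.comp h2)).mul (hb.comp h2)
  calc ∫⁻ ω, ‖∫ s in a..c, (f (X a ω) - f (X s ω)) * b (X s ω)‖ₑ ∂μ
      ≤ ∫⁻ ω, (∫⁻ s in Ioc a c, ‖(f (X a ω) - f (X s ω)) * b (X s ω)‖ₑ) ∂μ := by
        refine lintegral_mono fun ω => ?_
        rw [intervalIntegral.integral_of_le hac]
        exact enorm_integral_le_lintegral_enorm _
    _ = ∫⁻ s in Ioc a c, ∫⁻ ω, ‖(f (X a ω) - f (X s ω)) * b (X s ω)‖ₑ ∂μ :=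
        lintegral_lintegral_swap hmeas.enorm.aemeasurable
    _ ≤ ∫⁻ s in Ioc a c, ENNReal.ofReal (K * (c - a) ^ γ * N) := by
        refine setLIntegral_mono measurable_const fun s hs => ?_
        have hsm : s ∈ Icc (0 : ℝ) T := ⟨ha.1.trans hs.1.le, hs.2.trans hc.2⟩
        have h4 := h1 s hsm a ha
        rw [eLpNorm_one_eq_lintegral_enorm] at h4
        have hca : 0 ≤ c - a := by linarith
        calc ∫⁻ ω, ‖(f (X a ω) - f (X s ω)) * b (X s ω)‖ₑ ∂μ
            ≤ ∫⁻ ω, ‖f (X a ω) - f (X s ω)‖ₑ * ENNReal.ofReal N ∂μ := by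
              refine lintegral_mono fun ω => ?_
              rw [enorm_mul]
              gcongr
              rw [Real.enorm_eq_ofReal_abs]
              exact ENNReal.ofReal_le_ofReal (hN _)
          _ = (∫⁻ ω, ‖f (X a ω) - f (X s ω)‖ₑ ∂μ) * ENNReal.ofReal N :=
              lintegral_mul_const' _ _ (by simp)
          _ ≤ ENNReal.ofReal (K * |a - s| ^ γ) * ENNReal.ofReal N := by gcongr
          _ ≤ ENNReal.ofReal (K * (c - a) ^ γ * N) := by
              rw [← ENNReal.ofReal_mul (by positivity)]
              apply ENNReal.ofReal_le_ofReal
              have : |a - s| ≤ c - a := by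
                rw [abs_sub_comm, abs_of_nonneg (by linarith [hs.1])]
                linarith [hs.2]
              gcongr
    _ = ENNReal.ofReal ((c - a) * (K * (c - a) ^ γ * N)) := by
        rw [setLIntegral_const, Real.volume_Ioc, mul_comm,
          ← ENNReal.ofReal_mul (by linarith)]

lemma riemann_conv {Ω : Type*} [MeasurableSpace Ω] {μ : Measure Ω} [IsProbabilityMeasure μ]
    {X : ℝ → Ω → ℝ} (hX : Measurable (Function.uncurry X)) {f b : ℝ → ℝ}
    (hf : Measurable f) (hb : Measurable b) {M N : ℝ} (hM : ∀ x, |f x| ≤ M)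
    (hN : ∀ x, |b x| ≤ N)
    {t T K γ : ℝ} (ht : t ∈ Icc (0 : ℝ) T) (hK : 0 ≤ K) (hγ : 0 < γ)
    (h1 : ∀ s' ∈ Icc (0 : ℝ) T, ∀ t' ∈ Icc (0 : ℝ) T,
      eLpNorm (fun ω => f (X t' ω) - f (X s' ω)) 1 μ ≤ ENNReal.ofReal (K * |t' - s'| ^ γ)) :
    TendstoInMeasure μ
      (fun m ω => dyadicRiemannSum X (fun t' ω => ∫ s in (0 : ℝ)..t', b (X s ω)) f 0 t m ω) atTop
      (fun ω => ∫ s in (0 : ℝ)..t, f (X s ω) * b (X s ω)) := by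
  have hN0 : 0 ≤ N := (abs_nonneg _).trans (hN 0)
  have hM0 : 0 ≤ M := (abs_nonneg _).trans (hM 0)
  have ht0 : 0 ≤ t := ht.1
  have hfb : ∀ x, |f x * b x| ≤ M * N := fun x => by
    rw [abs_mul]; exact mul_le_mul (hM x) (hN x) (abs_nonneg _) hM0
  have hfX : ∀ s, Measurable fun ω => f (X s ω) := fun s =>
    hf.comp (hX.comp (measurable_const.prodMk measurable_id))
  refine tendstoInMeasure_of_tendsto_eLpNorm (p := 1) one_ne_zero
    (fun m => dyadic_aesm X _ f ht (fun s _ => (hfX s).aestronglyMeasurable)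
      (fun s _ => (integral_meas hX hb 0 s).aestronglyMeasurable) m)
    (integral_meas hX (hf.mul hb) 0 t).aestronglyMeasurable ?_
  have hdiff : ∀ m : ℕ,
      ((fun ω => dyadicRiemannSum X (fun t' ω => ∫ s in (0 : ℝ)..t', b (X s ω)) f 0 t m ω) -
        fun ω => ∫ s in (0 : ℝ)..t, f (X s ω) * b (X s ω)) =
      ∑ i ∈ Finset.range (2 ^ m), fun ω =>
        ∫ s in ((i : ℝ) * (2 : ℝ) ^ (-(m : ℝ)) * t)..(((i : ℝ) + 1) * (2 : ℝ) ^ (-(m : ℝ)) * t),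
        (f (X ((i : ℝ) * (2 : ℝ) ^ (-(m : ℝ)) * t) ω) - f (X s ω)) * b (X s ω) := by
    intro m
    ext ω
    have hJ := intervalIntegral.sum_integral_adjacent_intervals (n := 2 ^ m) (μ := volume)
      (a := fun i : ℕ => (i : ℝ) * (2 : ℝ) ^ (-(m : ℝ)) * t)
      (f := fun s => f (X s ω) * b (X s ω))
      (fun k _ => path_integrable hX (hf.mul hb) hfb ω _ _)
    have hend : ((2 ^ m : ℕ) : ℝ) * (2 : ℝ) ^ (-(m : ℝ)) * t = t := by
      rw [Real.rpow_neg (by norm_num), Real.rpow_natCast]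
      push_cast
      field_simp
    rw [hend] at hJ
    simp only [Nat.cast_zero, zero_mul, Nat.cast_add, Nat.cast_one] at hJ
    simp only [Pi.sub_apply, Finset.sum_apply]
    rw [← hJ, dyadicRiemannSum, ← Finset.sum_sub_distrib]
    apply Finset.sum_congr rfl
    intro i _
    simp only [zero_add, sub_zero]
    have hbi := fun a c => path_integrable hX hb hN ω a c
    rw [intervalIntegral.integral_interval_sub_left (hbi _ _) (hbi _ _),
      ← intervalIntegral.integral_const_mul, ← intervalIntegral.integral_sub
        ((hbi _ _).const_mul _)
        (show IntervalIntegrable (fun s => f (X s ω) * b (X s ω)) volume _ _ from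
          path_integrable hX (hf.mul hb) hfb ω _ _)]
    congr 1
    ext s
    ring
  have hle : ∀ m : ℕ, eLpNorm
      ((fun ω => dyadicRiemannSum X (fun t' ω => ∫ s in (0 : ℝ)..t', b (X s ω)) f 0 t m ω) -
        fun ω => ∫ s in (0 : ℝ)..t, f (X s ω) * b (X s ω)) 1 μ ≤
      ENNReal.ofReal (t * (K * t ^ γ * N) * (((2 : ℝ) ^ (-γ)) ^ m)) := by
    intro m
    rw [hdiff m]
    have hpos : (0 : ℝ) < (2 : ℝ) ^ (-(m : ℝ)) := by positivity
    have hmem : ∀ i ∈ Finset.range (2 ^ m),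
        (i : ℝ) * (2 : ℝ) ^ (-(m : ℝ)) * t ∈ Icc (0 : ℝ) T ∧
        ((i : ℝ) + 1) * (2 : ℝ) ^ (-(m : ℝ)) * t ∈ Icc (0 : ℝ) T := by
      intro i hi
      have hi' : (i : ℝ) + 1 ≤ 2 ^ m := by exact_mod_cast Finset.mem_range.1 hi
      exact ⟨grid_mem ht m (by positivity) (by linarith), grid_mem ht m (by positivity) hi'⟩
    refine (eLpNorm_sum_le (fun i _ => ?_) le_rfl).trans ?_
    · have hmeas : StronglyMeasurable (Function.uncurry fun (ω : Ω) (s : ℝ) =>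
          (f (X ((i : ℝ) * (2 : ℝ) ^ (-(m : ℝ)) * t) ω) - f (X s ω)) * b (X s ω)) := by
        have h2 : Measurable fun q : Ω × ℝ => X q.2 q.1 := hX.comp measurable_swap
        have h3 : Measurable fun q : Ω × ℝ => X ((i : ℝ) * (2 : ℝ) ^ (-(m : ℝ)) * t) q.1 :=
          hX.comp (measurable_const.prodMk measurable_fst)
        exact (((hf.comp h3).sub (hf.comp h2)).mul (hb.comp h2)).stronglyMeasurable
      unfold intervalIntegral
      exact (hmeas.integral_prod_right.sub hmeas.integral_prod_right).aestronglyMeasurable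
    · have each : ∀ i ∈ Finset.range (2 ^ m), eLpNorm (fun ω =>
          ∫ s in ((i : ℝ) * (2 : ℝ) ^ (-(m : ℝ)) * t)..(((i : ℝ) + 1) * (2 : ℝ) ^ (-(m : ℝ)) * t),
          (f (X ((i : ℝ) * (2 : ℝ) ^ (-(m : ℝ)) * t) ω) - f (X s ω)) * b (X s ω)) 1 μ ≤
          ENNReal.ofReal (((2 : ℝ) ^ (-(m : ℝ)) * t) * (K * ((2 : ℝ) ^ (-(m : ℝ)) * t) ^ γ * N)) := by
        intro i hi
        obtain ⟨a1, a2⟩ := hmem i hi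
        have := cell_bound hX hf hb hN hK hγ h1 a1 a2 (by gcongr; linarith)
        rwa [show ((i : ℝ) + 1) * (2 : ℝ) ^ (-(m : ℝ)) * t - (i : ℝ) * (2 : ℝ) ^ (-(m : ℝ)) * t
          = (2 : ℝ) ^ (-(m : ℝ)) * t by ring] at this
      refine (Finset.sum_le_sum each).trans ?_
      rw [Finset.sum_const, Finset.card_range, nsmul_eq_mul,
        ← ENNReal.ofReal_natCast, ← ENNReal.ofReal_mul (by positivity)]
      apply ENNReal.ofReal_le_ofReal
      apply le_of_eq
      rw [Real.mul_rpow hpos.le ht0, ← Real.rpow_natCast (_ ^ _), ← Real.rpow_mul (by norm_num),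
        ← Real.rpow_mul (by norm_num)]
      have e1 : ((2 ^ m : ℕ) : ℝ) * (2 : ℝ) ^ (-(m : ℝ)) = 1 := by
        rw [Real.rpow_neg (by norm_num), Real.rpow_natCast]
        push_cast
        field_simp
      rw [show -(m : ℝ) * γ = -γ * m by ring]
      linear_combination (t * (K * ((2 : ℝ) ^ (-γ * (m : ℝ)) * t ^ γ) * N)) * e1
  have hr : (2 : ℝ) ^ (-γ) < 1 := Real.rpow_lt_one_of_one_lt_of_neg (by norm_num) (by linarith)
  have hlim : Tendsto (fun m : ℕ =>
      ENNReal.ofReal (t * (K * t ^ γ * N) * (((2 : ℝ) ^ (-γ)) ^ m))) atTop (nhds 0) := by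
    have := ENNReal.tendsto_ofReal
      ((tendsto_pow_atTop_nhds_zero_of_lt_one (by positivity) hr).const_mul (t * (K * t ^ γ * N)))
    simpa using this
  exact tendsto_of_tendsto_of_tendsto_of_le_of_le tendsto_const_nhds hlim (fun _ => zero_le) hle

/-- Approximation of the Dirichlet integral: under the stated
assumptions, `I_n − ∫_0^t f_n(X_s)·b_n(X_s) ds → 0` in probability, where `I_n` is the
limit in probability of the dyadic Riemann sums of `f_n(X)` against `A`. -/
theorem dirichlet_integral_approximation
    {Ω : Type*} [MeasurableSpace Ω] (μ : Measure Ω) [IsProbabilityMeasure μ]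
    (T : ℝ) (hT : 0 < T)
    (X : ℝ → Ω → ℝ) (hX : Measurable (Function.uncurry X))
    (f : ℕ → ℝ → ℝ) (hf_cont : ∀ n, Continuous (f n))
    (hf_bdd : ∃ M : ℝ, ∀ n x, |f n x| ≤ M)
    (b : ℕ → ℝ → ℝ) (hb_cont : ∀ n, Continuous (b n))
    (hb_bdd : ∀ n, ∃ M : ℝ, ∀ x, |b n x| ≤ M)
    (A : ℝ → Ω → ℝ)
    (hAconv : ∀ t' ∈ Icc (0 : ℝ) T,
      TendstoInMeasure μ (fun n ω => ∫ s in (0 : ℝ)..t', b n (X s ω)) atTop (A t'))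
    (p₁ p₂ γ₁ γ₂ C_f C_A : ℝ)
    (hp₁ : 0 < p₁) (hp₂ : 0 < p₂) (hp : 1 / p₁ + 1 / p₂ ≤ 1)
    (hγ₁ : 0 < γ₁) (hγ₂ : 0 < γ₂) (hγ : 1 < γ₁ + γ₂)
    (hCf : 1 ≤ C_f) (hCA : 1 ≤ C_A)
    (hf1 : ∀ n, ∀ s' ∈ Icc (0 : ℝ) T, ∀ t' ∈ Icc (0 : ℝ) T,
      (∫ ω, |f n (X t' ω) - f n (X s' ω)| ^ p₁ ∂μ) ≤ C_f ^ p₁ * |t' - s'| ^ (p₁ * γ₁))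
    (hf2 : ∀ n, ∀ t' ∈ Icc (0 : ℝ) T, (∫ ω, |f n (X t' ω)| ^ p₁ ∂μ) ≤ C_f ^ p₁)
    (hA1 : ∀ s' ∈ Icc (0 : ℝ) T, ∀ t' ∈ Icc (0 : ℝ) T,
      (∫ ω, |A t' ω - A s' ω| ^ p₂ ∂μ) ≤ C_A ^ p₂ * |t' - s'| ^ (p₂ * γ₂))
    (hA2 : ∀ n, ∀ s' ∈ Icc (0 : ℝ) T, ∀ t' ∈ Icc (0 : ℝ) T,
      (∫ ω, |(∫ s in (0 : ℝ)..t', b n (X s ω)) - ∫ s in (0 : ℝ)..s', b n (X s ω)| ^ p₂ ∂μ)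
        ≤ C_A ^ p₂ * |t' - s'| ^ (p₂ * γ₂))
    (t : ℝ) (ht : t ∈ Icc (0 : ℝ) T)
    (I : ℕ → Ω → ℝ)
    (hI : ∀ n, TendstoInMeasure μ
      (fun m ω => dyadicRiemannSum X A (f n) 0 t m ω) atTop (I n)) :
    TendstoInMeasure μ
      (fun n ω => I n ω - ∫ s in (0 : ℝ)..t, f n (X s ω) * b n (X s ω))
      atTop (fun _ => (0 : ℝ)) := by
  obtain ⟨M, hM⟩ := hf_bdd
  have hM0 : 0 ≤ M := (abs_nonneg _).trans (hM 0 0)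
  have hfX : ∀ n s, AEStronglyMeasurable (fun ω => f n (X s ω)) μ := fun n s =>
    ((hf_cont n).measurable.comp
      (hX.comp (measurable_const.prodMk measurable_id))).aestronglyMeasurable
  let B : ℕ → ℝ → Ω → ℝ := fun n t' ω => ∫ s in (0 : ℝ)..t', b n (X s ω)
  have hBm : ∀ n s, AEStronglyMeasurable (B n s) μ := fun n s =>
    (integral_meas hX (hb_cont n).measurable 0 s).aestronglyMeasurable
  have hAm : ∀ s ∈ Icc (0 : ℝ) T, AEStronglyMeasurable (A s) μ := fun s hs =>
    (hAconv s hs).aestronglyMeasurable (fun n => hBm n s)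
  have hp1 : 1 ≤ p₁ := by
    have : 0 < 1 / p₂ := by positivity
    have h : 1 / p₁ ≤ 1 := by linarith
    rwa [div_le_one hp₁] at h
  -- bounds in `L^p`
  have hFb : ∀ n, ∀ s' ∈ Icc (0 : ℝ) T, ∀ t' ∈ Icc (0 : ℝ) T,
      eLpNorm (fun ω => f n (X t' ω) - f n (X s' ω)) (ENNReal.ofReal p₁) μ ≤
        ENNReal.ofReal (C_f * |t' - s'| ^ γ₁) := fun n s' hs t' ht =>
    eLpNorm_le_of_moment ((hfX n t').sub (hfX n s')) (K := M + M)
      (fun ω => (abs_sub _ _).trans (add_le_add (hM _ _) (hM _ _))) hp₁ (by linarith)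
      (abs_nonneg _) (hf1 n s' hs t' ht)
  have hF1 : ∀ n, ∀ s' ∈ Icc (0 : ℝ) T, ∀ t' ∈ Icc (0 : ℝ) T,
      eLpNorm (fun ω => f n (X t' ω) - f n (X s' ω)) 1 μ ≤
        ENNReal.ofReal (C_f * |t' - s'| ^ γ₁) := fun n s' hs t' ht =>
    (eLpNorm_le_eLpNorm_of_exponent_le (by simpa using hp1)
      ((hfX n t').sub (hfX n s'))).trans (hFb n s' hs t' ht)
  have hBb : ∀ n, ∀ s' ∈ Icc (0 : ℝ) T, ∀ t' ∈ Icc (0 : ℝ) T,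
      eLpNorm (fun ω => B n t' ω - B n s' ω) (ENNReal.ofReal p₂) μ ≤
        ENNReal.ofReal (C_A * |t' - s'| ^ γ₂) := by
    intro n s' hs t' ht
    obtain ⟨N, hN⟩ := hb_bdd n
    refine eLpNorm_le_of_moment ((hBm n t').sub (hBm n s')) (K := N * |t' - s'|)
      (fun ω => ?_) hp₂ (by linarith) (abs_nonneg _) (hA2 n s' hs t' ht)
    have hbi := fun a c => path_integrable hX (hb_cont n).measurable hN ω a c
    simp only [B, Pi.sub_apply]
    rw [intervalIntegral.integral_interval_sub_left (hbi _ _) (hbi _ _)]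
    rw [← Real.norm_eq_abs]
    refine intervalIntegral.norm_integral_le_of_norm_le_const fun x _ => ?_
    exact hN _
  have hdiff0 : ∀ s' ∈ Icc (0 : ℝ) T,
      TendstoInMeasure μ (fun n ω => A s' ω - B n s' ω) atTop (fun _ => (0 : ℝ)) := by
    intro s' hs
    have := hAconv s' hs
    rw [tendstoInMeasure_iff_norm] at this ⊢
    intro ε hε
    refine (this ε hε).congr fun n => ?_
    simp only [sub_zero]
    congr 1
    ext ω
    simp only [mem_ofPred_eq, B]
    rw [norm_sub_rev]
  have hinc0 : ∀ s' ∈ Icc (0 : ℝ) T, ∀ t' ∈ Icc (0 : ℝ) T,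
      TendstoInMeasure μ (fun n ω => (A t' ω - A s' ω) - (B n t' ω - B n s' ω)) atTop
        (fun _ => (0 : ℝ)) := by
    intro s' hs t' ht
    refine tim_zero_of_le one_pos (hdiff0 t' ht) (hdiff0 s' hs) fun n ω => ?_
    rw [one_mul, show (A t' ω - A s' ω) - (B n t' ω - B n s' ω) =
      (A t' ω - B n t' ω) - (A s' ω - B n s' ω) by ring]
    exact abs_sub _ _
  have hAb : ∀ s' ∈ Icc (0 : ℝ) T, ∀ t' ∈ Icc (0 : ℝ) T,
      eLpNorm (fun ω => A t' ω - A s' ω) (ENNReal.ofReal p₂) μ ≤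
        ENNReal.ofReal (C_A * |t' - s'| ^ γ₂) := by
    intro s' hs t' ht
    refine eLpNorm_le_of_tendstoInMeasure (u := atTop)
      (f := fun n ω => B n t' ω - B n s' ω)
      (Eventually.of_forall fun n => hBb n s' hs t' ht) ?_
      (fun n => (hBm n t').sub (hBm n s'))
    have := hinc0 s' hs t' ht
    rw [tendstoInMeasure_iff_norm] at this ⊢
    intro ε hε
    refine (this ε hε).congr fun n => ?_
    simp only [sub_zero]
    congr 1
    ext ω
    simp only [mem_ofPred_eq]
    rw [norm_sub_rev]
  -- the sewing estimates
  have hr : (2 : ℝ) ^ (1 - (γ₁ + γ₂)) < 1 :=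
    Real.rpow_lt_one_of_one_lt_of_neg (by norm_num) (by linarith)
  have hD : 0 ≤ C_f * C_A * t ^ (γ₁ + γ₂) := by
    have := ht.1
    positivity
  have hSA : ∀ n m, AEStronglyMeasurable (dyadicRiemannSum X A (f n) 0 t m) μ := fun n m =>
    dyadic_aesm X A (f n) ht (fun s _ => hfX n s) hAm m
  have hSB : ∀ n m, AEStronglyMeasurable (dyadicRiemannSum X (B n) (f n) 0 t m) μ := fun n m =>
    dyadic_aesm X (B n) (f n) ht (fun s _ => hfX n s) (fun s _ => hBm n s) m
  have hJ : ∀ n, TendstoInMeasure μ (fun m ω => dyadicRiemannSum X (B n) (f n) 0 t m ω) atTop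
      (fun ω => ∫ s in (0 : ℝ)..t, f n (X s ω) * b n (X s ω)) := by
    intro n
    obtain ⟨N, hN⟩ := hb_bdd n
    exact riemann_conv hX (hf_cont n).measurable (hb_cont n).measurable (hM n) hN ht
      (by linarith) hγ₁ (hF1 n)
  have hIm : ∀ n, AEStronglyMeasurable (I n) μ := fun n =>
    (hI n).aestronglyMeasurable (fun m => hSA n m)
  have hJm : ∀ n, AEStronglyMeasurable
      (fun ω => ∫ s in (0 : ℝ)..t, f n (X s ω) * b n (X s ω)) μ := fun n =>
    (hJ n).aestronglyMeasurable (fun m => hSB n m)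
  have hUb : ∀ m n, eLpNorm (fun ω => I n ω - dyadicRiemannSum X A (f n) 0 t m ω) 1 μ ≤ _ :=
    fun m n => dyadic_limit_norm (hSA n) (hI n) hD (by positivity) hr
      (fun m => dyadic_step_norm X A (f n) ht (fun s _ => hfX n s) hAm hp₁ hp₂ hp hγ₁ hγ₂
        (by linarith) (by linarith) (hFb n) hAb m) m
  have hWb : ∀ m n, eLpNorm (fun ω => (∫ s in (0 : ℝ)..t, f n (X s ω) * b n (X s ω)) -
      dyadicRiemannSum X (B n) (f n) 0 t m ω) 1 μ ≤ _ :=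
    fun m n => dyadic_limit_norm (hSB n) (hJ n) hD (by positivity) hr
      (fun m => dyadic_step_norm X (B n) (f n) ht (fun s _ => hfX n s) (fun s _ => hBm n s)
        hp₁ hp₂ hp hγ₁ hγ₂ (by linarith) (by linarith) (hFb n) (hBb n) m) m
  refine tim_zero_of_approx
    (U := fun m n ω => I n ω - dyadicRiemannSum X A (f n) 0 t m ω)
    (V := fun m n ω => dyadicRiemannSum X A (f n) 0 t m ω -
      dyadicRiemannSum X (B n) (f n) 0 t m ω)
    (W := fun m n ω => dyadicRiemannSum X (B n) (f n) 0 t m ω -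
      ∫ s in (0 : ℝ)..t, f n (X s ω) * b n (X s ω))
    (e := fun m => C_f * C_A * t ^ (γ₁ + γ₂) * ((2 : ℝ) ^ (1 - (γ₁ + γ₂))) ^ m /
      (1 - (2 : ℝ) ^ (1 - (γ₁ + γ₂))))
    ?_ (fun m n ω => by ring) (fun m n => (hIm n).sub (hSA n m))
    (fun m n => (hSB n m).sub (hJm n)) hUb (fun m n => ?_) (fun m => ?_)
  · have := ((tendsto_pow_atTop_nhds_zero_of_lt_one (by positivity) hr).const_mul
      (C_f * C_A * t ^ (γ₁ + γ₂))).div_const (1 - (2 : ℝ) ^ (1 - (γ₁ + γ₂)))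
    simpa using this
  · refine le_trans (le_of_eq ?_) (hWb m n)
    exact eLpNorm_sub_comm _ _ _ _
  · simp only [dyadicRiemannSum, ← Finset.sum_sub_distrib]
    refine tim_zero_sum (V := fun i n ω => _ - _) (2 ^ m) fun i hi => ?_
    have hi' : (i : ℝ) + 1 ≤ 2 ^ m := by exact_mod_cast hi
    have a1 := grid_mem ht m (x := i) (by positivity) (by linarith)
    have a2 := grid_mem ht m (x := i + 1) (by positivity) hi'
    simp only [zero_add, sub_zero]
    refine tim_zero_of_le (M := M + 1) (by linarith) (hinc0 _ a1 _ a2) (hinc0 _ a1 _ a2)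
      fun n ω => ?_
    rw [← mul_sub, abs_mul]
    have h1 := hM n (X ((i : ℝ) * (2 : ℝ) ^ (-(m : ℝ)) * t) ω)
    refine mul_le_mul (by linarith) ?_ (abs_nonneg _) (by linarith)
    exact le_add_of_nonneg_right (abs_nonneg _)
end
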